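/- There exists a positive constant K such that for all integers n and l with 0 ≤ 2l ≤ n, the hypergraph H_n^l is (K, n^{-1/2})-bounded; that is, for every i ∈ {1,2,3} and every q ∈ [n^{-1/2}, 1], E[ Σ_{v ∈ V(H_n^l)} deg_i(v, V(H_n^l)_q)² ] ≤ K q^{2i} |E(H_n^l)|² / |V(H_n^l)|. -/

import Mathlib

/-!
Write `H` for the set of `l`-shortcuts. If `H` is empty both sides vanish, so assume it is not.

*Second moment.* Expanding the square, the expectation is a sum over `v` and pairs `S, T ∈ H`
through `v` of the probability that both have at least `i` further elements in the random set. A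
union bound over `i`-subsets `A ⊆ S \ {v}`, `B ⊆ T \ {v}` bounds this probability by a constant
times the maximum of `q ^ #(A ∪ B) = q ^ (2 * i - #(A ∩ B))`. Here `#(A ∩ B) ≤ #(S ∩ T) - 1 ≤ 3`,
and `q ≥ n ^ (-1/2)` gives `q ^ (-j) ≤ n ^ min j 2` for `j ≤ 3`. Hence the expectation is
`O(q ^ (2 * i))` times the sum over `k < 3` of `n ^ k` times the number of pairs with
`#(S ∩ T) ≥ k + 1` (`expectation_le_pairs`).

*Counting pairs.* The edges of a shortcut, each seen as joining the two parameters among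
`i₁, i₂, i₃, i₄` that determine it, form a 4-cycle on these parameters. So any `k + 1 ≤ 3` of them
involve at least `k + 2` parameters, and once `S` is fixed, all but `2 - k` parameters of `T` are
confined to a set of at most `24` values. This leaves `O(n ^ (2 - k))` choices of `T`
(`card_meeting_le`), hence `O(n ^ (6 - k))` pairs, and the expectation is `O(q ^ (2 * i) * n ^ 6)`.

*Lower bound on `#H`.* Since `l ≤ n / 2`, for `n ≥ 16` there is room for order `n ^ 4` type (i)
tuples, and each shortcut comes from boundedly many tuples; for `n < 16` one shortcut is enough
(`pow_four_le_card`). With `#V ≤ n ^ 2` this turns `n ^ 6` into `O(#H ^ 2 / #V)`.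
-/

open Filter Topology Classical

/-- The clockwise arc length from `a` to `b` on the discrete circle `ZMod n`. -/
def arcDist {n : ℕ} (a b : ZMod n) : ℕ := (b - a).val

/-- The points of `L` are all distinct and lie in this clockwise cyclic order
on the discrete circle `ZMod n` (the consecutive clockwise arcs, including the
wrap-around arc, sum to exactly `n`). -/
def InClockwiseOrder {n : ℕ} (L : List (ZMod n)) : Prop :=
  L.Nodup ∧ ((L.zip (L.rotate 1)).map fun q => arcDist q.1 q.2).sum = n

/-- The Hamilton cycle `C_n` on vertex set `ZMod n`, with edges `{i, i+1}`. -/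
def cycleGraph (n : ℕ) : SimpleGraph (ZMod n) :=
  SimpleGraph.fromEdgeSet {e | ∃ i : ZMod n, e = s(i, i + 1)}

/-- The four edges of the `l`-shortcut determined by `i₁ i₂ i₃ i₄`. -/
def shortcutEdges {n : ℕ} (l : ℕ) (i₁ i₂ i₃ i₄ : ZMod n) : Finset (Sym2 (ZMod n)) :=
  {s(i₁, i₃), s(i₁ + 1, i₄), s(i₂, i₄ + (l : ZMod n) + 1), s(i₂ + 1, i₃ + 1)}

/-- `(i₁, i₂, i₃, i₄)` determines an `l`-shortcut (of type (i) or type (ii)) in `K_n ∖ C_n`. -/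
def IsShortcutTuple {n : ℕ} (l : ℕ) (i₁ i₂ i₃ i₄ : ZMod n) : Prop :=
  (InClockwiseOrder [i₁, i₁ + 1, i₂, i₂ + 1, i₃, i₃ + 1, i₄, i₄ + (l : ZMod n) + 1] ∨
   InClockwiseOrder [i₁, i₁ + 1, i₂, i₂ + 1, i₄, i₄ + (l : ZMod n) + 1, i₃, i₃ + 1]) ∧
  ∀ e ∈ shortcutEdges l i₁ i₂ i₃ i₄, e ∉ (cycleGraph n).edgeSet

/-- The edge set `S` is an `l`-shortcut. -/
def IsShortcut {n : ℕ} (l : ℕ) (S : Finset (Sym2 (ZMod n))) : Prop :=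
  ∃ i₁ i₂ i₃ i₄ : ZMod n, IsShortcutTuple l i₁ i₂ i₃ i₄ ∧ S = shortcutEdges l i₁ i₂ i₃ i₄

/-- The number of `l`-shortcuts all of whose edges belong to the edge set `U`. -/
noncomputable def shortcutCountIn {n : ℕ} (l : ℕ) (U : Set (Sym2 (ZMod n))) : ℕ :=
  {S : Finset (Sym2 (ZMod n)) | IsShortcut l S ∧ (S : Set (Sym2 (ZMod n))) ⊆ U}.ncard

/-- `G` contains an `l`-shortcut. -/
def ContainsShortcut {n : ℕ} (l : ℕ) (G : SimpleGraph (ZMod n)) : Prop :=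
  ∃ i₁ i₂ i₃ i₄ : ZMod n, IsShortcutTuple l i₁ i₂ i₃ i₄ ∧
    (shortcutEdges l i₁ i₂ i₃ i₄ : Set (Sym2 (ZMod n))) ⊆ G.edgeSet

/-- `G` contains a cycle of length `t`. -/
def HasCycleLength {V : Type} (G : SimpleGraph V) (t : ℕ) : Prop :=
  ∃ (v : V) (w : G.Walk v v), w.IsCycle ∧ w.length = t

/-- The vertex set of the hypergraph `H_n^l`: the edge set of the complete graph on `ZMod n`. -/
def knEdges (n : ℕ) : Set (Sym2 (ZMod n)) := {e | ¬ e.IsDiag}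

/-- The vertex set of `H_n^l` as a finset (for `n ≠ 0`). -/
noncomputable def knEdgeFinset (n : ℕ) [NeZero n] : Finset (Sym2 (ZMod n)) :=
  Finset.univ.filter (fun e => ¬ e.IsDiag)

/-- `deg_i(v, U)` in the hypergraph `H_n^l`: the number of hyperedges (`l`-shortcuts) `S`
with `v ∈ S` and `|S ∩ (U ∖ {v})| ≥ i`. -/
noncomputable def shortcutDeg {n : ℕ} (l i : ℕ) (v : Sym2 (ZMod n))
    (U : Finset (Sym2 (ZMod n))) : ℕ :=
  {S : Finset (Sym2 (ZMod n)) | IsShortcut l S ∧ v ∈ S ∧ i ≤ (S ∩ U.erase v).card}.ncard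

/-- `E[ Σ_{v ∈ V(H_n^l)} deg_i(v, (V(H_n^l))_q)² ]`, where `(V(H_n^l))_q` is the random
subset of `V(H_n^l)` keeping each element independently with probability `q`. -/
noncomputable def shortcutDegSqExpectation (n l i : ℕ) (q : ℝ) : ℝ :=
  if h : n = 0 then 0 else
    letI : NeZero n := ⟨h⟩
    ∑ W ∈ (knEdgeFinset n).powerset,
      q ^ W.card * (1 - q) ^ ((knEdgeFinset n).card - W.card) *
        ∑ v ∈ knEdgeFinset n, ((shortcutDeg l i v W : ℝ))^2

/-! ### Second moment of the degrees of a random subset -/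

/-- If each element of `E` is kept with probability `q`, then a fixed set `A` is contained in
the random subset with probability at most `q ^ #A`. -/
lemma sum_weight_superset_le {V : Type*} [DecidableEq V] (E A : Finset V) {q : ℝ} (hq : 0 ≤ q) :
    ∑ W ∈ E.powerset, q ^ W.card * (1 - q) ^ (E.card - W.card) * (if A ⊆ W then (1 : ℝ) else 0)
      ≤ q ^ A.card := by
  by_cases hA : A ⊆ E
  · have h1 : ∑ W ∈ E.powerset,
        q ^ W.card * (1 - q) ^ (E.card - W.card) * (if A ⊆ W then (1 : ℝ) else 0)
        = ∑ W ∈ Finset.Icc A E, q ^ W.card * (1 - q) ^ (E.card - W.card) := by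
      simp only [mul_ite, mul_one, mul_zero]
      rw [← Finset.sum_filter]
      congr 1
      ext W
      simp [and_comm]
    rw [h1, Finset.Icc_eq_image_powerset hA, Finset.sum_image]
    · have h2 : ∀ X ∈ (E \ A).powerset,
          q ^ (A ∪ X).card * (1 - q) ^ (E.card - (A ∪ X).card)
          = q ^ A.card * (q ^ X.card * (1 - q) ^ ((E \ A).card - X.card)) := by
        intro X hX
        have hX' := Finset.mem_powerset.1 hX
        have hd : Disjoint A X := Finset.disjoint_of_subset_right hX' Finset.disjoint_sdiff
        rw [Finset.card_union_of_disjoint hd, Finset.card_sdiff_of_subset hA, pow_add,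
          Nat.sub_sub, mul_assoc]
      rw [Finset.sum_congr rfl h2, ← Finset.mul_sum, Finset.sum_pow_mul_eq_add_pow]
      simp
    · intro X hX Y hY hXY
      have hX' : X ⊆ E \ A := Finset.mem_powerset.1 hX
      have hY' : Y ⊆ E \ A := Finset.mem_powerset.1 hY
      have hdX : Disjoint A X := Finset.disjoint_of_subset_right hX' Finset.disjoint_sdiff
      have hdY : Disjoint A Y := Finset.disjoint_of_subset_right hY' Finset.disjoint_sdiff
      have := congrArg (fun Z => Z \ A) hXY
      simpa [Finset.union_sdiff_distrib, hdX.symm.sdiff_eq_left, hdY.symm.sdiff_eq_left] using this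
  · rw [Finset.sum_eq_zero]
    · positivity
    · intro W hW
      rw [if_neg, mul_zero]
      exact fun h => hA (h.trans (Finset.mem_powerset.1 hW))

/-- For `q ≥ x^(-1/2)`, losing `j ≤ 3` factors `q` costs at most `x ^ min j 2`. -/
lemma one_le_pow_mul_pow {q x : ℝ} (hq : 0 < q) (hq1 : q ≤ 1) (hx : 1 ≤ q ^ 2 * x) {j m : ℕ}
    (hjm : j ≤ m) (hm : m ≤ 3) : 1 ≤ q ^ j * x ^ min m 2 := by
  have hx1 : 1 ≤ x := by
    have hq2 : q ^ 2 ≤ 1 := pow_le_one₀ hq.le hq1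
    have hx0 : 0 < x := by
      by_contra h
      nlinarith [sq_nonneg q]
    nlinarith
  have h1 : 1 ≤ q * x := by nlinarith
  have h3 : 1 ≤ q ^ j * x ^ min j 2 := by
    have hj : j ≤ 3 := hjm.trans hm
    interval_cases j
    · simp
    · simpa using h1
    · calc 1 ≤ q ^ 2 * x := hx
        _ ≤ q ^ 2 * x ^ 2 := by gcongr; nlinarith
    · calc (1 : ℝ) ≤ (q ^ 2 * x) * (q * x) := by nlinarith
        _ = q ^ 3 * x ^ 2 := by ring
  refine h3.trans ?_
  gcongr

/-- The joint probability that two hyperedges `S, T` through `v` each have at least `i` further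
vertices in the random set. A union bound over `i`-subsets `A ⊆ S`, `B ⊆ T` reduces this to
`q ^ #(A ∪ B)`, and `#(A ∩ B) ≤ #(S ∩ T) - 1` as `v` lies in neither `A` nor `B`. -/
lemma sum_weight_pair_le {V : Type*} [DecidableEq V] (E S T : Finset V) (v : V) {q x : ℝ} {i : ℕ}
    (hq : 0 < q) (hq1 : q ≤ 1) (hx : 1 ≤ q ^ 2 * x) (hS : S.card ≤ 4) (hT : T.card ≤ 4)
    (hvS : v ∈ S) (hvT : v ∈ T) :
    ∑ W ∈ E.powerset, q ^ W.card * (1 - q) ^ (E.card - W.card) *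
      (if i ≤ (S ∩ W.erase v).card ∧ i ≤ (T ∩ W.erase v).card then (1 : ℝ) else 0)
      ≤ 256 * (q ^ (2 * i) * x ^ min ((S ∩ T).card - 1) 2) := by
  set D := (S.erase v).powersetCard i ×ˢ (T.erase v).powersetCard i with hD
  have hDcard : (D.card : ℝ) ≤ 256 := by
    have h : ∀ X : Finset V, X.card ≤ 4 → ((X.erase v).powersetCard i).card ≤ 16 := by
      intro X hX
      calc ((X.erase v).powersetCard i).card ≤ (X.powerset).card :=
            Finset.card_le_card fun Y hY => Finset.mem_powerset.2
              ((Finset.mem_powersetCard.1 hY).1.trans (Finset.erase_subset _ _))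
        _ = 2 ^ X.card := Finset.card_powerset _
        _ ≤ 2 ^ 4 := Nat.pow_le_pow_right (by norm_num) hX
    have : D.card ≤ 16 * 16 := by
      rw [hD, Finset.card_product]
      exact Nat.mul_le_mul (h S hS) (h T hT)
    exact_mod_cast this
  have hx0 : 0 < x := by
    by_contra h
    nlinarith [sq_nonneg q]
  have hw : ∀ W : Finset V, 0 ≤ q ^ W.card * (1 - q) ^ (E.card - W.card) := fun W =>
    mul_nonneg (pow_nonneg hq.le _) (pow_nonneg (by linarith) _)
  calc _ ≤ ∑ W ∈ E.powerset, q ^ W.card * (1 - q) ^ (E.card - W.card) *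
        ∑ P ∈ D, (if P.1 ∪ P.2 ⊆ W then (1 : ℝ) else 0) := by
        refine Finset.sum_le_sum fun W _ => mul_le_mul_of_nonneg_left ?_ (hw W)
        have hnn : ∀ P ∈ D, (0 : ℝ) ≤ if P.1 ∪ P.2 ⊆ W then (1 : ℝ) else 0 := by
          intro P _
          split_ifs <;> norm_num
        split_ifs with h
        · obtain ⟨A, hA, hAc⟩ := Finset.exists_subset_card_eq h.1
          obtain ⟨B, hB, hBc⟩ := Finset.exists_subset_card_eq h.2
          have hmem : (A, B) ∈ D := by
            simp only [hD, Finset.mem_product, Finset.mem_powersetCard]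
            refine ⟨⟨fun a ha => ?_, hAc⟩, fun a ha => ?_, hBc⟩
            · have := hA ha; simp only [Finset.mem_inter, Finset.mem_erase] at this ⊢; tauto
            · have := hB ha; simp only [Finset.mem_inter, Finset.mem_erase] at this ⊢; tauto
          have hAB : A ∪ B ⊆ W := by
            intro a ha
            rcases Finset.mem_union.1 ha with ha | ha
            · exact Finset.mem_of_mem_erase (Finset.mem_inter.1 (hA ha)).2
            · exact Finset.mem_of_mem_erase (Finset.mem_inter.1 (hB ha)).2
          have := Finset.single_le_sum hnn hmem
          simpa [hAB] using this
        · exact Finset.sum_nonneg hnn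
    _ = ∑ P ∈ D, ∑ W ∈ E.powerset, q ^ W.card * (1 - q) ^ (E.card - W.card) *
          (if P.1 ∪ P.2 ⊆ W then (1 : ℝ) else 0) := by
        simp_rw [Finset.mul_sum]
        exact Finset.sum_comm
    _ ≤ ∑ P ∈ D, q ^ (2 * i) * x ^ min ((S ∩ T).card - 1) 2 := by
        refine Finset.sum_le_sum fun P hP => (sum_weight_superset_le E _ hq.le).trans ?_
        simp only [hD, Finset.mem_product, Finset.mem_powersetCard] at hP
        obtain ⟨⟨hA, hAc⟩, hB, hBc⟩ := hP
        have hsum := Finset.card_union_add_card_inter P.1 P.2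
        have hinter : (P.1 ∩ P.2).card ≤ (S ∩ T).card - 1 := by
          rw [← Finset.card_erase_of_mem (Finset.mem_inter.2 ⟨hvS, hvT⟩)]
          refine Finset.card_le_card fun a ha => ?_
          have h1 := hA (Finset.mem_inter.1 ha).1
          have h2 := hB (Finset.mem_inter.1 ha).2
          simp only [Finset.mem_inter, Finset.mem_erase] at h1 h2 ⊢
          tauto
        have hm : (S ∩ T).card - 1 ≤ 3 := by
          have := Finset.card_le_card (Finset.inter_subset_left (s₁ := S) (s₂ := T))
          omega
        have hone := one_le_pow_mul_pow hq hq1 hx hinter hm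
        have h2i : 2 * i = (P.1 ∪ P.2).card + (P.1 ∩ P.2).card := by omega
        rw [h2i, pow_add, mul_assoc]
        exact le_mul_of_one_le_right (by positivity) hone
    _ = D.card * (q ^ (2 * i) * x ^ min ((S ∩ T).card - 1) 2) := by
        rw [Finset.sum_const, nsmul_eq_mul]
    _ ≤ _ := by gcongr

/-- For a family `H` of sets of size at most `4`, the expected sum of squared `i`-degrees is
controlled by the numbers of pairs of hyperedges meeting in at least `1`, `2`, `3` vertices. -/
lemma expectation_le_pairs {V : Type*} [DecidableEq V] (E : Finset V) (H : Finset (Finset V))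
    {q x : ℝ} {i : ℕ}
    (hq : 0 < q) (hq1 : q ≤ 1) (hx : 1 ≤ q ^ 2 * x) (hH : ∀ S ∈ H, S.card ≤ 4) :
    ∑ W ∈ E.powerset, q ^ W.card * (1 - q) ^ (E.card - W.card) *
      ∑ v ∈ E, ((H.filter fun S => v ∈ S ∧ i ≤ (S ∩ W.erase v).card).card : ℝ) ^ 2
      ≤ 1024 * q ^ (2 * i) * ∑ k ∈ Finset.range 3,
          x ^ k * ∑ S ∈ H, ((H.filter fun T => k + 1 ≤ (S ∩ T).card).card : ℝ) := by
  have hx0 : 0 < x := by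
    by_contra h
    nlinarith [sq_nonneg q]
  have hsq : ∀ (W : Finset V) (v : V),
      ((H.filter fun S => v ∈ S ∧ i ≤ (S ∩ W.erase v).card).card : ℝ) ^ 2
      = ∑ S ∈ H.filter (v ∈ ·), ∑ T ∈ H.filter (v ∈ ·),
        (if i ≤ (S ∩ W.erase v).card ∧ i ≤ (T ∩ W.erase v).card then (1 : ℝ) else 0) := by
    intro W v
    rw [← Finset.filter_filter, Finset.card_filter, sq]
    push_cast
    rw [Finset.sum_mul_sum]
    refine Finset.sum_congr rfl fun S _ => Finset.sum_congr rfl fun T _ => ?_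
    by_cases h1 : i ≤ (S ∩ W.erase v).card <;> by_cases h2 : i ≤ (T ∩ W.erase v).card <;>
      simp [h1, h2]
  set F : Finset V → Finset V → ℝ := fun S T =>
    256 * (q ^ (2 * i) * x ^ min ((S ∩ T).card - 1) 2) with hF
  calc _ = ∑ v ∈ E, ∑ S ∈ H.filter (v ∈ ·), ∑ T ∈ H.filter (v ∈ ·),
        ∑ W ∈ E.powerset, q ^ W.card * (1 - q) ^ (E.card - W.card) *
          (if i ≤ (S ∩ W.erase v).card ∧ i ≤ (T ∩ W.erase v).card then (1 : ℝ) else 0) := by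
        simp_rw [hsq, Finset.mul_sum]
        rw [Finset.sum_comm]
        refine Finset.sum_congr rfl fun v _ => ?_
        rw [Finset.sum_comm]
        refine Finset.sum_congr rfl fun S _ => ?_
        rw [Finset.sum_comm]
    _ ≤ ∑ v ∈ E, ∑ S ∈ H.filter (v ∈ ·), ∑ T ∈ H.filter (v ∈ ·), F S T := by
        refine Finset.sum_le_sum fun v _ => Finset.sum_le_sum fun S hS =>
          Finset.sum_le_sum fun T hT => ?_
        rw [Finset.mem_filter] at hS hT
        exact sum_weight_pair_le E S T v hq hq1 hx (hH S hS.1) (hH T hT.1) hS.2 hT.2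
    _ = ∑ S ∈ H, ∑ T ∈ H, ((E.filter fun v => v ∈ S ∧ v ∈ T).card : ℝ) * F S T := by
        simp_rw [Finset.sum_filter (fun S => _ ∈ S) (fun S => Finset.sum _ _)]
        rw [Finset.sum_comm]
        refine Finset.sum_congr rfl fun S _ => ?_
        have : ∀ v ∈ E, (if v ∈ S then ∑ T ∈ H.filter (v ∈ ·), F S T else 0)
            = ∑ T ∈ H, if v ∈ S ∧ v ∈ T then F S T else 0 := by
          intro v _
          by_cases hv : v ∈ S <;> simp [hv, Finset.sum_filter]
        rw [Finset.sum_congr rfl this, Finset.sum_comm]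
        refine Finset.sum_congr rfl fun T _ => ?_
        rw [← Finset.sum_filter, Finset.sum_const, nsmul_eq_mul]
    _ ≤ ∑ S ∈ H, ∑ T ∈ H, 1024 * q ^ (2 * i) * ∑ k ∈ Finset.range 3,
          x ^ k * (if k + 1 ≤ (S ∩ T).card then (1 : ℝ) else 0) := by
        refine Finset.sum_le_sum fun S hS => Finset.sum_le_sum fun T hT => ?_
        have hc : (E.filter fun v => v ∈ S ∧ v ∈ T).card ≤ (S ∩ T).card :=
          Finset.card_le_card fun v hv => by
            simp only [Finset.mem_filter, Finset.mem_inter] at hv ⊢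
            exact hv.2
        have h4 : (S ∩ T).card ≤ 4 :=
          (Finset.card_le_card Finset.inter_subset_left).trans (hH S hS)
        have hc4 : ((E.filter fun v => v ∈ S ∧ v ∈ T).card : ℝ) ≤ 4 := by
          exact_mod_cast hc.trans h4
        by_cases h0 : (S ∩ T).card = 0
        · rw [h0, Nat.le_zero] at hc
          rw [hc]
          simp only [Nat.cast_zero, zero_mul]
          refine mul_nonneg (by positivity) (Finset.sum_nonneg fun k _ => ?_)
          split_ifs <;> positivity
        · have hterm : x ^ min ((S ∩ T).card - 1) 2 ≤ ∑ k ∈ Finset.range 3,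
              x ^ k * (if k + 1 ≤ (S ∩ T).card then (1 : ℝ) else 0) := by
            have hnn : ∀ k ∈ Finset.range 3,
                0 ≤ x ^ k * (if k + 1 ≤ (S ∩ T).card then (1 : ℝ) else 0) := by
              intro k _
              split_ifs <;> positivity
            have hmem : min ((S ∩ T).card - 1) 2 ∈ Finset.range 3 := by
              rw [Finset.mem_range]; omega
            have := Finset.single_le_sum hnn hmem
            rwa [if_pos (by omega), mul_one] at this
          calc _ ≤ 4 * F S T := by gcongr
            _ = 1024 * q ^ (2 * i) * x ^ min ((S ∩ T).card - 1) 2 := by simp only [hF]; ring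
            _ ≤ _ := by gcongr
    _ = _ := by
        simp_rw [← Finset.mul_sum]
        congr 1
        simp_rw [Finset.card_filter]
        push_cast
        simp_rw [Finset.mul_sum]
        rw [Finset.sum_comm (s := Finset.range 3)]
        refine Finset.sum_congr rfl fun S _ => ?_
        rw [Finset.sum_comm]

/-! ### Counting shortcuts that share edges -/

/-- The vertices of `K_n` from which the coordinates of an `l`-shortcut tuple can be read off once
its edges are known to lie in `S`: endpoints of edges of `S`, shifted by `0`, `-1` or `-(l+1)`. -/
noncomputable def anchorSet {n : ℕ} (l : ℕ) (S : Finset (Sym2 (ZMod n))) : Finset (ZMod n) :=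
  S.biUnion fun e => e.toFinset ∪ e.toFinset.image (· - 1) ∪
    e.toFinset.image (· - ((l : ZMod n) + 1))

lemma mem_anchorSet {n l : ℕ} {S : Finset (Sym2 (ZMod n))} {e : Sym2 (ZMod n)} {a : ZMod n}
    (he : e ∈ S) (ha : a ∈ e ∨ a + 1 ∈ e ∨ a + (l : ZMod n) + 1 ∈ e) : a ∈ anchorSet l S := by
  simp only [anchorSet, Finset.mem_biUnion, Finset.mem_union, Finset.mem_image, Sym2.mem_toFinset]
  refine ⟨e, he, ?_⟩
  rcases ha with ha | ha | ha
  · exact Or.inl (Or.inl ha)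
  · exact Or.inl (Or.inr ⟨_, ha, by ring⟩)
  · exact Or.inr ⟨_, ha, by ring⟩

lemma card_anchorSet_le {n l : ℕ} {S : Finset (Sym2 (ZMod n))} (hS : S.card ≤ 4) :
    (anchorSet l S).card ≤ 24 := by
  have h2 : ∀ e : Sym2 (ZMod n), e.toFinset.card ≤ 2 := fun e => by
    rw [Sym2.card_toFinset]; split_ifs <;> norm_num
  have : (anchorSet l S).card ≤ S.card * 6 := by
    refine Finset.card_biUnion_le_card_mul _ _ _ fun e _ => ?_
    have h1 := Finset.card_union_le (e.toFinset ∪ e.toFinset.image (· - 1))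
      (e.toFinset.image (· - ((l : ZMod n) + 1)))
    have h3 := Finset.card_union_le e.toFinset (e.toFinset.image (· - 1))
    have h4 := Finset.card_image_le (s := e.toFinset) (f := (· - (1 : ZMod n)))
    have h5 := Finset.card_image_le (s := e.toFinset) (f := (· - ((l : ZMod n) + 1)))
    have := h2 e
    omega
  omega

/-- The shortcut edge set of a tuple, with the tuple packed as a function on `Fin 4`. -/
def tupleEdges {n : ℕ} (l : ℕ) (t : Fin 4 → ZMod n) : Finset (Sym2 (ZMod n)) :=
  shortcutEdges l (t 0) (t 1) (t 2) (t 3)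

lemma card_tupleEdges_le {n : ℕ} (l : ℕ) (t : Fin 4 → ZMod n) : (tupleEdges l t).card ≤ 4 :=
  Finset.card_le_four

/-- Seen as edges on the four coordinates, the four edges of a shortcut form a 4-cycle, so any
`k ≤ 3` of them touch at least `k + 1` coordinates; those coordinates lie in the anchor set. -/
lemma succ_le_card_anchored {n l k : ℕ} {S : Finset (Sym2 (ZMod n))} {t : Fin 4 → ZMod n}
    (hk : k < 3) (h : k + 1 ≤ (S ∩ tupleEdges l t).card) :
    k + 2 ≤ (Finset.univ.filter fun c => t c ∈ anchorSet l S).card := by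
  have hcard : (S ∩ tupleEdges l t).card ≤
      (if s(t 0, t 2) ∈ S then 1 else 0) + (if s(t 0 + 1, t 3) ∈ S then 1 else 0) +
      (if s(t 1, t 3 + (l : ZMod n) + 1) ∈ S then 1 else 0) +
      (if s(t 1 + 1, t 2 + 1) ∈ S then 1 else 0) := by
    have hins : ∀ (a : Sym2 (ZMod n)) (X : Finset (Sym2 (ZMod n))),
        (S ∩ insert a X).card ≤ (if a ∈ S then 1 else 0) + (S ∩ X).card := by
      intro a X
      split_ifs with ha
      · rw [Finset.inter_insert_of_mem ha, add_comm]
        exact Finset.card_insert_le _ _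
      · rw [Finset.inter_insert_of_notMem ha, zero_add]
    have h0 := hins s(t 0, t 2)
      {s(t 0 + 1, t 3), s(t 1, t 3 + (l : ZMod n) + 1), s(t 1 + 1, t 2 + 1)}
    have h1 := hins s(t 0 + 1, t 3) {s(t 1, t 3 + (l : ZMod n) + 1), s(t 1 + 1, t 2 + 1)}
    have h2 := hins s(t 1, t 3 + (l : ZMod n) + 1) {s(t 1 + 1, t 2 + 1)}
    have h3 := hins s(t 1 + 1, t 2 + 1) ∅
    simp only [Finset.inter_empty, Finset.card_empty, insert_empty_eq] at h3
    simp only [tupleEdges, shortcutEdges]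
    omega
  have e0 : s(t 0, t 2) ∈ S → t 0 ∈ anchorSet l S ∧ t 2 ∈ anchorSet l S := fun he =>
    ⟨mem_anchorSet he (by simp), mem_anchorSet he (by simp)⟩
  have e1 : s(t 0 + 1, t 3) ∈ S → t 0 ∈ anchorSet l S ∧ t 3 ∈ anchorSet l S := fun he =>
    ⟨mem_anchorSet he (by simp), mem_anchorSet he (by simp)⟩
  have e2 : s(t 1, t 3 + (l : ZMod n) + 1) ∈ S → t 1 ∈ anchorSet l S ∧ t 3 ∈ anchorSet l S :=
    fun he => ⟨mem_anchorSet he (by simp), mem_anchorSet he (by simp)⟩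
  have e3 : s(t 1 + 1, t 2 + 1) ∈ S → t 1 ∈ anchorSet l S ∧ t 2 ∈ anchorSet l S := fun he =>
    ⟨mem_anchorSet he (by simp), mem_anchorSet he (by simp)⟩
  have hanch : (Finset.univ.filter fun c => t c ∈ anchorSet l S).card =
      (if t 0 ∈ anchorSet l S then 1 else 0) + (if t 1 ∈ anchorSet l S then 1 else 0) +
      (if t 2 ∈ anchorSet l S then 1 else 0) + (if t 3 ∈ anchorSet l S then 1 else 0) := by
    rw [Finset.card_filter, Fin.sum_univ_four]
  rw [hanch]
  generalize anchorSet l S = Y at *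
  by_cases p0 : s(t 0, t 2) ∈ S <;> by_cases p1 : s(t 0 + 1, t 3) ∈ S <;>
    by_cases p2 : s(t 1, t 3 + (l : ZMod n) + 1) ∈ S <;> by_cases p3 : s(t 1 + 1, t 2 + 1) ∈ S <;>
    simp only [p0, p1, p2, p3, if_true, if_false, forall_true_left] at hcard e0 e1 e2 e3 <;>
    first | omega | (simp only [*, if_true]; omega)

/-- At most `O(n ^ (4 - j))` tuples have `j` or more coordinates in a set of bounded size. -/
lemma card_many_anchored_le {n : ℕ} [NeZero n] (Y : Finset (ZMod n)) (hY : Y.card ≤ 24) (j : ℕ)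
    (hj : j ≤ 4) :
    (Finset.univ.filter fun t : Fin 4 → ZMod n =>
      j ≤ (Finset.univ.filter fun c => t c ∈ Y).card).card ≤ 16 * 24 ^ 4 * n ^ (4 - j) := by
  have hsub : (Finset.univ.filter fun t : Fin 4 → ZMod n =>
      j ≤ (Finset.univ.filter fun c => t c ∈ Y).card) ⊆
      ((Finset.univ : Finset (Fin 4)).powersetCard j).biUnion fun C =>
        Fintype.piFinset fun c => if c ∈ C then Y else Finset.univ := by
    intro t ht
    obtain ⟨C, hC, hCj⟩ := Finset.exists_subset_card_eq (Finset.mem_filter.1 ht).2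
    rw [Finset.mem_biUnion]
    refine ⟨C, Finset.mem_powersetCard.2 ⟨Finset.subset_univ _, hCj⟩, ?_⟩
    rw [Fintype.mem_piFinset]
    intro c
    split_ifs with hc
    · exact (Finset.mem_filter.1 (hC hc)).2
    · exact Finset.mem_univ _
  refine (Finset.card_le_card hsub).trans ?_
  have hle : ∀ C ∈ (Finset.univ : Finset (Fin 4)).powersetCard j,
      (Fintype.piFinset fun c => if c ∈ C then Y else Finset.univ).card ≤
        24 ^ 4 * n ^ (4 - j) := by
    intro C hC
    have hCj := (Finset.mem_powersetCard.1 hC).2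
    rw [Fintype.card_piFinset]
    have : ∀ c, (if c ∈ C then Y else Finset.univ).card = if c ∈ C then Y.card else n := by
      intro c
      split_ifs
      · rfl
      · rw [Finset.card_univ, ZMod.card]
    simp_rw [this]
    rw [Finset.prod_ite, Finset.prod_const, Finset.prod_const]
    have h1 : (Finset.univ.filter (· ∈ C)).card = j := by
      rw [← hCj]; congr 1; ext; simp
    have h2 : (Finset.univ.filter (· ∉ C)).card = 4 - j := by
      have := Finset.card_filter_add_card_filter_not (s := (Finset.univ : Finset (Fin 4))) (· ∈ C)
      rw [Finset.card_univ, Fintype.card_fin] at this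
      omega
    rw [h1, h2]
    refine Nat.mul_le_mul_right _ ?_
    calc Y.card ^ j ≤ 24 ^ j := Nat.pow_le_pow_left hY j
      _ ≤ 24 ^ 4 := Nat.pow_le_pow_right (by norm_num) hj
  refine (Finset.card_biUnion_le_card_mul _ _ _ hle).trans ?_
  have : ((Finset.univ : Finset (Fin 4)).powersetCard j).card ≤ 16 := by
    rw [Finset.card_powersetCard, Finset.card_univ, Fintype.card_fin]
    interval_cases j <;> decide
  calc _ ≤ 16 * (24 ^ 4 * n ^ (4 - j)) := Nat.mul_le_mul_right _ this
    _ = _ := by ring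

/-- The edge set of `H_n^l` as a finset. -/
noncomputable def shortcutFinset (n l : ℕ) [NeZero n] : Finset (Finset (Sym2 (ZMod n))) :=
  Finset.univ.filter (IsShortcut l)

lemma exists_tuple_of_mem {n l : ℕ} [NeZero n] {S : Finset (Sym2 (ZMod n))}
    (hS : S ∈ shortcutFinset n l) : ∃ t : Fin 4 → ZMod n, S = tupleEdges l t := by
  obtain ⟨a, b, c, d, -, h⟩ := (Finset.mem_filter.1 hS).2
  exact ⟨![a, b, c, d], by simpa [tupleEdges] using h⟩

lemma card_le_four_of_mem {n l : ℕ} [NeZero n] {S : Finset (Sym2 (ZMod n))}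
    (hS : S ∈ shortcutFinset n l) : S.card ≤ 4 := by
  obtain ⟨t, rfl⟩ := exists_tuple_of_mem hS
  exact card_tupleEdges_le l t

lemma card_shortcutFinset_le (n l : ℕ) [NeZero n] : (shortcutFinset n l).card ≤ n ^ 4 := by
  have : shortcutFinset n l ⊆ Finset.univ.image (tupleEdges (n := n) l) := by
    intro S hS
    obtain ⟨t, rfl⟩ := exists_tuple_of_mem hS
    exact Finset.mem_image_of_mem _ (Finset.mem_univ _)
  refine (Finset.card_le_card this).trans (Finset.card_image_le.trans ?_)
  simp [ZMod.card]

/-- A fixed `S` shares `k + 1` edges with only `O(n ^ (2 - k))` shortcuts. -/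
lemma card_meeting_le {n l k : ℕ} [NeZero n] {S : Finset (Sym2 (ZMod n))} (hS : S.card ≤ 4)
    (hk : k < 3) :
    ((shortcutFinset n l).filter fun T => k + 1 ≤ (S ∩ T).card).card
      ≤ 16 * 24 ^ 4 * n ^ (2 - k) := by
  have hsub : ((shortcutFinset n l).filter fun T => k + 1 ≤ (S ∩ T).card) ⊆
      (Finset.univ.filter fun t : Fin 4 → ZMod n =>
        k + 2 ≤ (Finset.univ.filter fun c => t c ∈ anchorSet l S).card).image
          (tupleEdges l) := by
    intro T hT
    rw [Finset.mem_filter] at hT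
    obtain ⟨t, rfl⟩ := exists_tuple_of_mem hT.1
    exact Finset.mem_image_of_mem _
      (Finset.mem_filter.2 ⟨Finset.mem_univ _, succ_le_card_anchored hk hT.2⟩)
  refine (Finset.card_le_card hsub).trans (Finset.card_image_le.trans ?_)
  have := card_many_anchored_le (anchorSet l S) (card_anchorSet_le hS) (k + 2) (by omega)
  rwa [show 4 - (k + 2) = 2 - k by omega] at this

/-! ### Lower bound on the number of shortcuts -/

lemma natCast_inj_of_lt {n u v : ℕ} (hu : u < n) (hv : v < n) (h : (u : ZMod n) = v) : u = v := by
  rw [ZMod.natCast_eq_natCast_iff'] at h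
  rwa [Nat.mod_eq_of_lt hu, Nat.mod_eq_of_lt hv] at h

lemma arcDist_offset {n : ℕ} (a : ZMod n) {u v : ℕ} (huv : u ≤ v) (hv : v < n) :
    arcDist (a + (u : ZMod n)) (a + (v : ZMod n)) = v - u := by
  have : a + (v : ZMod n) - (a + u) = ((v - u : ℕ) : ZMod n) := by
    rw [Nat.cast_sub huv]; ring
  rw [arcDist, this, ZMod.val_natCast_of_lt (by omega)]

lemma arcDist_wrap {n : ℕ} (a : ZMod n) {u : ℕ} (hu : 0 < u) (hun : u < n) :
    arcDist (a + (u : ZMod n)) (a + ((0 : ℕ) : ZMod n)) = n - u := by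
  have : a + ((0 : ℕ) : ZMod n) - (a + u) = ((n - u : ℕ) : ZMod n) := by
    rw [Nat.cast_sub hun.le]; simp
  rw [arcDist, this, ZMod.val_natCast_of_lt (by omega)]

/-- A chord between offsets `u < v < n` lies on `C_n` only if `v = u + 1`, or it is the closing
edge `{0, n - 1}`. -/
lemma notMem_cycle_offset {n : ℕ} (a : ZMod n) {u v : ℕ} (huv : u < v) (hv : v < n)
    (h1 : v ≠ u + 1) (h2 : ¬ (u = 0 ∧ v + 1 = n)) :
    s(a + (u : ZMod n), a + (v : ZMod n)) ∉ (cycleGraph n).edgeSet := by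
  intro h
  rw [cycleGraph, SimpleGraph.edgeSet_fromEdgeSet] at h
  obtain ⟨⟨i, hi⟩, -⟩ := h
  rw [Sym2.eq_iff] at hi
  rcases hi with ⟨hu, hw⟩ | ⟨hu, hw⟩
  · rw [← hu, add_assoc, add_right_inj] at hw
    exact h1 (natCast_inj_of_lt hv (by omega) (by push_cast; exact hw))
  · rw [← hw, add_assoc, add_right_inj] at hu
    have hu' : (u : ZMod n) = ((v + 1 : ℕ) : ZMod n) := by push_cast; exact hu
    by_cases hvn : v + 1 = n
    · rw [hvn, ZMod.natCast_self, ← Nat.cast_zero] at hu'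
      exact h2 ⟨natCast_inj_of_lt (by omega) (by omega) hu', hvn⟩
    · have := natCast_inj_of_lt (by omega) (by omega) hu'
      omega

/-- Widely separated offsets give a type (i) shortcut tuple. -/
lemma isShortcutTuple_offset {n l : ℕ} (a : ZMod n) {x y z : ℕ} (hx : 1 < x) (hy : x + 1 < y)
    (hz : y + 1 < z) (hn : z + l + 1 < n) :
    IsShortcutTuple l a (a + x) (a + y) (a + z) := by
  have e0 : a = a + ((0 : ℕ) : ZMod n) := by simp
  have e1 : a + 1 = a + ((1 : ℕ) : ZMod n) := by simp
  have e2 : a + (x : ZMod n) + 1 = a + ((x + 1 : ℕ) : ZMod n) := by push_cast; ring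
  have e3 : a + (y : ZMod n) + 1 = a + ((y + 1 : ℕ) : ZMod n) := by push_cast; ring
  have e4 : a + (z : ZMod n) + (l : ZMod n) + 1 = a + ((z + l + 1 : ℕ) : ZMod n) := by
    push_cast; ring
  refine ⟨Or.inl ?_, ?_⟩
  · have hlist : [a, a + 1, a + x, a + x + 1, a + y, a + y + 1, a + z, a + z + (l : ZMod n) + 1]
        = [0, 1, x, x + 1, y, y + 1, z, z + l + 1].map fun u : ℕ => a + (u : ZMod n) := by
      rw [e1, e2, e3, e4]
      simp
    rw [hlist]
    refine ⟨?_, ?_⟩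
    · refine List.Nodup.map_on ?_ ?_
      · intro u hu v hv h
        refine natCast_inj_of_lt (n := n) ?_ ?_ (add_left_cancel h)
        · simp only [List.mem_cons, List.not_mem_nil, or_false] at hu; omega
        · simp only [List.mem_cons, List.not_mem_nil, or_false] at hv; omega
      · simp only [List.nodup_cons, List.mem_cons, List.not_mem_nil, or_false, not_or,
          not_false_eq_true, List.nodup_nil, and_true]
        omega
    · simp only [List.map_cons, List.map_nil, List.rotate_cons_succ, List.rotate_zero,
        List.cons_append, List.nil_append, List.zip_cons_cons, List.zip_nil_right,
        List.sum_cons, List.sum_nil]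
      rw [arcDist_wrap a (by omega) hn, arcDist_offset a (by omega) (by omega),
        arcDist_offset a (by omega) (by omega), arcDist_offset a (by omega) (by omega),
        arcDist_offset a (by omega) (by omega), arcDist_offset a (by omega) (by omega),
        arcDist_offset a (by omega) (by omega), arcDist_offset a (by omega) (by omega)]
      omega
  · intro e he
    simp only [shortcutEdges, Finset.mem_insert, Finset.mem_singleton] at he
    rw [e1, e2, e3, e4] at he
    rcases he with rfl | rfl | rfl | rfl
    · nth_rewrite 1 [e0]
      exact notMem_cycle_offset a (by omega) (by omega) (by omega) (by omega)
    all_goals exact notMem_cycle_offset a (by omega) (by omega) (by omega) (by omega)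

/-- The tuples `(a, a + x, a + y, a + z)` with `x, y, z` in consecutive intervals of length
`n / 16` are all shortcuts, and a shortcut comes from at most `16 * 24 ^ 4` tuples. -/
lemma mul_pow_le_card {n l : ℕ} [NeZero n] (hl : 2 * l ≤ n) :
    n * (n / 16) ^ 3 ≤ 16 * 24 ^ 4 * (shortcutFinset n l).card := by
  set m := n / 16 with hm
  set T := (Finset.univ : Finset (ZMod n)) ×ˢ
    (Finset.range m ×ˢ (Finset.range m ×ˢ Finset.range m)) with hT
  have hTc : T.card = n * m ^ 3 := by
    simp only [hT, Finset.card_product, Finset.card_univ, ZMod.card, Finset.card_range]; ring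
  set f : ZMod n × ℕ × ℕ × ℕ → (Fin 4 → ZMod n) := fun p =>
    ![p.1, p.1 + (2 + p.2.1 : ℕ), p.1 + (3 + m + p.2.2.1 : ℕ), p.1 + (4 + 2 * m + p.2.2.2 : ℕ)]
    with hf
  have hinj : Set.InjOn f T := by
    rintro ⟨a, x, y, z⟩ hp ⟨a', x', y', z'⟩ hp' h
    simp only [hT, Finset.coe_product, Set.mem_prod, Finset.mem_coe, Finset.mem_range] at hp hp'
    obtain ⟨-, hx, hy, hz⟩ := hp
    obtain ⟨-, hx', hy', hz'⟩ := hp'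
    have ha : a = a' := congrFun h 0
    subst ha
    have h1 := natCast_inj_of_lt (u := 2 + x) (v := 2 + x') (by omega) (by omega)
      (add_left_cancel (congrFun h 1))
    have h2 := natCast_inj_of_lt (u := 3 + m + y) (v := 3 + m + y') (by omega) (by omega)
      (add_left_cancel (congrFun h 2))
    have h3 := natCast_inj_of_lt (u := 4 + 2 * m + z) (v := 4 + 2 * m + z') (by omega) (by omega)
      (add_left_cancel (congrFun h 3))
    simp only [Prod.mk.injEq, true_and]
    omega
  have hmaps : ∀ t ∈ T.image f, tupleEdges l t ∈ shortcutFinset n l := by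
    intro t ht
    obtain ⟨⟨a, x, y, z⟩, hp, rfl⟩ := Finset.mem_image.1 ht
    simp only [hT, Finset.mem_product, Finset.mem_range] at hp
    obtain ⟨-, hx, hy, hz⟩ := hp
    exact Finset.mem_filter.2 ⟨Finset.mem_univ _, _, _, _, _,
      isShortcutTuple_offset a (x := 2 + x) (y := 3 + m + y) (z := 4 + 2 * m + z) (by omega) (by omega)
        (by omega) (by omega), rfl⟩
  have hfib : ∀ S ∈ shortcutFinset n l,
      ((T.image f).filter fun t => tupleEdges l t = S).card ≤ 16 * 24 ^ 4 := by
    intro S hS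
    have := card_many_anchored_le (anchorSet l S)
      (card_anchorSet_le (card_le_four_of_mem hS)) 4 le_rfl
    rw [Nat.sub_self, pow_zero, mul_one] at this
    refine (Finset.card_le_card fun t ht => ?_).trans this
    have hts := (Finset.mem_filter.1 ht).2
    refine Finset.mem_filter.2 ⟨Finset.mem_univ _, ?_⟩
    have hall : ∀ c, t c ∈ anchorSet l S := by
      have h0 : s(t 0, t 2) ∈ S := by rw [← hts]; simp [tupleEdges, shortcutEdges]
      have h2 : s(t 1, t 3 + (l : ZMod n) + 1) ∈ S := by
        rw [← hts]; simp [tupleEdges, shortcutEdges]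
      intro c
      fin_cases c
      · exact mem_anchorSet h0 (by simp)
      · exact mem_anchorSet h2 (by simp)
      · exact mem_anchorSet h0 (by simp)
      · exact mem_anchorSet h2 (by simp)
    simp [hall]
  have := Finset.card_le_mul_card_image_of_maps_to hmaps _ hfib
  rwa [Finset.card_image_of_injOn hinj, hTc] at this

/-- A nonempty `H_n^l` has order `n ^ 4` hyperedges; for `n < 16` a single one is enough. -/
lemma pow_four_le_card {n l : ℕ} [NeZero n] (hl : 2 * l ≤ n)
    (hne : (shortcutFinset n l).Nonempty) :
    n ^ 4 ≤ 2 ^ 19 * 24 ^ 4 * (shortcutFinset n l).card := by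
  have h1 := hne.card_pos
  by_cases hn : 16 ≤ n
  · have h := mul_pow_le_card hl
    have h32 : n ≤ 32 * (n / 16) := by omega
    calc n ^ 4 = n * n ^ 3 := by ring
      _ ≤ n * (32 * (n / 16)) ^ 3 := by gcongr
      _ = 2 ^ 15 * (n * (n / 16) ^ 3) := by ring
      _ ≤ 2 ^ 15 * (16 * 24 ^ 4 * (shortcutFinset n l).card) := by gcongr
      _ = _ := by ring
  · have : n ^ 4 ≤ 16 ^ 4 := Nat.pow_le_pow_left (by omega) 4
    omega

/-! ### The boundedness estimate -/

/-- There is a constant `K > 0` such that for all `n, l` with `0 ≤ 2l ≤ n` the hypergraph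
`H_n^l` is `(K, n^(-1/2))`-bounded. -/
theorem shortcut_hypergraph_bounded :
    ∃ K : ℝ, 0 < K ∧ ∀ n l : ℕ, 2 * l ≤ n →
      ∀ i : ℕ, i ∈ ({1, 2, 3} : Set ℕ) →
      ∀ q : ℝ, (n : ℝ) ^ (-(1/2) : ℝ) ≤ q → q ≤ 1 →
        shortcutDegSqExpectation n l i q ≤
          K * q ^ (2 * i) *
            (({S : Finset (Sym2 (ZMod n)) | IsShortcut l S}.ncard : ℝ))^2 /
              ((knEdges n).ncard : ℝ) := by
  have hrpow : ∀ n : ℕ, n ≠ 0 → ∀ q : ℝ, (n : ℝ) ^ (-(1/2) : ℝ) ≤ q →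
      0 < q ∧ 1 ≤ q ^ 2 * n := by
    intro n hn q hq
    have hn0 : (0 : ℝ) < n := by exact_mod_cast Nat.pos_of_ne_zero hn
    have hp : 0 < (n : ℝ) ^ (-(1/2) : ℝ) := Real.rpow_pos_of_pos hn0 _
    refine ⟨hp.trans_le hq, ?_⟩
    have hsq : ((n : ℝ) ^ (-(1/2) : ℝ)) ^ 2 = (n : ℝ)⁻¹ := by
      rw [← Real.rpow_natCast, ← Real.rpow_mul hn0.le, ← Real.rpow_neg_one]
      norm_num
    calc (1 : ℝ) = (n : ℝ)⁻¹ * n := (inv_mul_cancel₀ hn0.ne').symm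
      _ ≤ q ^ 2 * n := by rw [← hsq]; gcongr
  -- The constants are kept abstract, as unfolding the large numerals is expensive.
  obtain ⟨c, hc, hmeet⟩ : ∃ c : ℕ, 0 < c ∧ ∀ (n l k : ℕ) [NeZero n] (S : Finset (Sym2 (ZMod n))),
      S.card ≤ 4 → k < 3 →
      ((shortcutFinset n l).filter fun T => k + 1 ≤ (S ∩ T).card).card ≤ c * n ^ (2 - k) :=
    ⟨_, by norm_num, fun n l k _ S hS hk => card_meeting_le hS hk⟩
  obtain ⟨d, hd, hmany⟩ : ∃ d : ℕ, 0 < d ∧ ∀ (n l : ℕ) [NeZero n], 2 * l ≤ n →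
      (shortcutFinset n l).Nonempty → n ^ 4 ≤ d * (shortcutFinset n l).card :=
    ⟨_, by norm_num, fun n l _ hl hne => pow_four_le_card hl hne⟩
  refine ⟨1024 * (3 * c) * d ^ 2, by positivity, ?_⟩
  intro n l hl i _ q hq hq1
  by_cases hn : n = 0
  · -- For `n = 0` the expectation is `0` by definition.
    have h0 : 0 ≤ q := (Real.rpow_nonneg (Nat.cast_nonneg n) _).trans hq
    rw [shortcutDegSqExpectation, dif_pos hn]
    positivity
  have : NeZero n := ⟨hn⟩
  obtain ⟨hq0, hx⟩ := hrpow n hn q hq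
  have hn1 : (0 : ℝ) < n := by exact_mod_cast Nat.pos_of_ne_zero hn
  have hH : ({S : Finset (Sym2 (ZMod n)) | IsShortcut l S}.ncard : ℝ)
      = (shortcutFinset n l).card := by
    rw [← Set.ncard_coe_finset]; congr 2; ext S; simp [shortcutFinset]
  have hE : ((knEdges n).ncard : ℝ) = (knEdgeFinset n).card := by
    rw [← Set.ncard_coe_finset]; congr 2; ext e; simp [knEdgeFinset, knEdges]
  have hdeg : ∀ v W, shortcutDeg (n := n) l i v W
      = ((shortcutFinset n l).filter fun S => v ∈ S ∧ i ≤ (S ∩ W.erase v).card).card := by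
    intro v W
    rw [shortcutDeg, ← Set.ncard_coe_finset]; congr 1; ext S; simp [shortcutFinset]
  rw [hH, hE, shortcutDegSqExpectation, dif_neg hn]
  simp_rw [hdeg]
  set H := shortcutFinset n l with hHdef
  set E := knEdgeFinset n with hEdef
  have hbound := expectation_le_pairs (i := i) E H hq0 hq1 hx fun S hS => card_le_four_of_mem hS
  by_cases hne : H.Nonempty
  swap
  · rw [Finset.not_nonempty_iff_eq_empty.1 hne]
    simp
  by_cases hE0 : E.card = 0
  · rw [Finset.card_eq_zero.1 hE0]
    simp
  have hEpos : (0 : ℝ) < E.card := by exact_mod_cast Nat.pos_of_ne_zero hE0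
  have hEle : (E.card : ℝ) ≤ (n : ℝ) ^ 2 := by
    have h1 : E.card ≤ Fintype.card (Sym2 (ZMod n)) := Finset.card_le_univ _
    have h2 : Fintype.card (Sym2 (ZMod n)) ≤ Fintype.card (ZMod n × ZMod n) :=
      Fintype.card_le_of_surjective _ Sym2.mk_surjective
    rw [Fintype.card_prod, ZMod.card] at h2
    have : E.card ≤ n ^ 2 := by rw [sq]; exact h1.trans h2
    exact_mod_cast this
  have hlow : (n : ℝ) ^ 4 ≤ d * (H.card : ℝ) := by
    exact_mod_cast hmany n l hl hne
  have hpairs : ∑ k ∈ Finset.range 3,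
      (n : ℝ) ^ k * ∑ S ∈ H, ((H.filter fun T => k + 1 ≤ (S ∩ T).card).card : ℝ)
      ≤ 3 * c * (n : ℝ) ^ 6 := by
    have hk : ∀ k ∈ Finset.range 3,
        (n : ℝ) ^ k * ∑ S ∈ H, ((H.filter fun T => k + 1 ≤ (S ∩ T).card).card : ℝ)
        ≤ c * (n : ℝ) ^ 6 := by
      intro k hk
      have hk3 := Finset.mem_range.1 hk
      have h1 : ∑ S ∈ H, ((H.filter fun T => k + 1 ≤ (S ∩ T).card).card : ℝ)
          ≤ ∑ S ∈ H, c * (n : ℝ) ^ (2 - k) := by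
        refine Finset.sum_le_sum fun S hS => ?_
        exact_mod_cast hmeet n l k S (card_le_four_of_mem hS) hk3
      have h2 : (H.card : ℝ) ≤ (n : ℝ) ^ 4 := by exact_mod_cast card_shortcutFinset_le n l
      have h3 : (n : ℝ) ^ 6 = (n : ℝ) ^ k * ((n : ℝ) ^ 4 * (n : ℝ) ^ (2 - k)) := by
        rw [← pow_add, ← pow_add]; congr 1; omega
      rw [Finset.sum_const, nsmul_eq_mul] at h1
      calc _ ≤ (n : ℝ) ^ k * (H.card * (c * (n : ℝ) ^ (2 - k))) := by gcongr
        _ ≤ (n : ℝ) ^ k * ((n : ℝ) ^ 4 * (c * (n : ℝ) ^ (2 - k))) := by gcongr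
        _ = _ := by rw [h3]; ring
    refine (Finset.sum_le_card_nsmul _ _ _ hk).trans (le_of_eq ?_)
    rw [Finset.card_range, nsmul_eq_mul]; push_cast; ring
  refine hbound.trans ?_
  rw [le_div_iff₀ hEpos]
  calc _ ≤ 1024 * q ^ (2 * i) * (3 * c * (n : ℝ) ^ 6) * (n : ℝ) ^ 2 := by gcongr
    _ = 1024 * (3 * c) * q ^ (2 * i) * ((n : ℝ) ^ 4) ^ 2 := by ring
    _ ≤ 1024 * (3 * c) * q ^ (2 * i) * (d * (H.card : ℝ)) ^ 2 := by
        gcongr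
    _ = _ := by ring
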